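/- Let N ≥ 2, let B ⊂ ℝ^N be a radial domain and let 𝓤 be a set of continuous functions defined on B. Define M = {e ∈ S : u(x) ≥ u(σ_e(x)) for all x ∈ B(e) and all u ∈ 𝓤}. If S = M ∪ (−M), i.e., for every e ∈ S either u ≥ u ∘ σ_e on B(e) for all u ∈ 𝓤 or u ≤ u ∘ σ_e on B(e) for all u ∈ 𝓤, then there exists p ∈ S such that every u ∈ 𝓤 is foliated Schwarz symmetric with respect to p. -/

import Mathlib

/-!
The axis `p` is the direction of a first moment of one function of the family.  For a closed
annulus `K ⊆ B` and `u ∈ 𝓤` put `v = ∫_K u(y) y dy`.  Since `σ_e` preserves `K` and the measure,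
`2 ⟪v, e⟫ = ∫_K (u(y) - u(σ_e y)) ⟪y, e⟫ dy` (`two_mul_moment`).  If `e ∈ M` the integrand is
nonnegative on all of `B` (`reflIntegrand_nonneg`), so `⟪v, e⟫ ≥ 0`; by continuity `⟪v, e⟫ > 0` as
soon as `u ≠ u ∘ σ_e` somewhere in the interior of `K`.

If `M` is the whole sphere, any `p` works.  Otherwise some `e ∉ M`; then `-e ∈ M`, and a suitable
choice of `u` and `K` gives `⟪v, -e⟫ > 0`, so `v ≠ 0` and `p = v / ‖v‖` is defined.  Any unit `f`
with `⟪f, p⟫ > 0` lies in `M`, since otherwise `-f ∈ M` would force `⟪v, f⟫ ≤ 0`.  As `M` is closed,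
the same holds when `⟪f, p⟫ = 0` (`mem_reflMonotoneSet_of_inner_nonneg`).  Finally, distinct
points `x`, `y` of equal norm are exchanged by the reflection with normal `(x - y) / ‖x - y‖`,
so `M ⊇ {⟪f, p⟫ ≥ 0}` is the desired symmetry (`foliatedSchwarzOn_of_forall_mem`).
-/

open Set Metric Filter
open scoped RealInnerProductSpace

noncomputable section

variable {N : ℕ}

/-- Reflection through the hyperplane `H(e) = {x : ⟪x,e⟫ = 0}`:
`σ_e(x) = x - 2 (x·e) e`. -/
def reflHyp (e x : EuclideanSpace ℝ (Fin N)) : EuclideanSpace ℝ (Fin N) :=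
  x - (2 * ⟪x, e⟫) • e

/-- The half domain `B(e) = {x ∈ B : x·e > 0}`. -/
def halfDom (B : Set (EuclideanSpace ℝ (Fin N))) (e : EuclideanSpace ℝ (Fin N)) :
    Set (EuclideanSpace ℝ (Fin N)) := {x ∈ B | 0 < ⟪x, e⟫}

/-- A radial domain: an open ball or an open annulus centered at the origin. -/
def IsRadialDomain (B : Set (EuclideanSpace ℝ (Fin N))) : Prop :=
  (∃ R, 0 < R ∧ B = Metric.ball 0 R) ∨
  (∃ r R, 0 < r ∧ r < R ∧ B = {x : EuclideanSpace ℝ (Fin N) | r < ‖x‖ ∧ ‖x‖ < R})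

/-- `u` is foliated Schwarz symmetric on `D` with respect to the unit vector `p`:
`u(x) ≥ u(y)` whenever `|x| = |y|` and `x·p ≥ y·p`.  (This is equivalent to axial
symmetry with respect to `ℝp` together with monotonicity in the polar angle.) -/
def FoliatedSchwarzOn (D : Set (EuclideanSpace ℝ (Fin N)))
    (u : EuclideanSpace ℝ (Fin N) → ℝ) (p : EuclideanSpace ℝ (Fin N)) : Prop :=
  ∀ x ∈ D, ∀ y ∈ D, ‖x‖ = ‖y‖ → ⟪y, p⟫ ≤ ⟪x, p⟫ → u y ≤ u x

/-- The set `M = {e ∈ S : u ≥ u ∘ σ_e on B(e) for all u ∈ 𝓤}`. -/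
def reflMonotoneSet (B : Set (EuclideanSpace ℝ (Fin N)))
    (𝓤 : Set (EuclideanSpace ℝ (Fin N) → ℝ)) : Set (EuclideanSpace ℝ (Fin N)) :=
  {e | ‖e‖ = 1 ∧ ∀ u ∈ 𝓤, ∀ x ∈ halfDom B e, u (reflHyp e x) ≤ u x}

open MeasureTheory Topology

/-! ### The hyperplane reflection -/

lemma norm_reflHyp {e : EuclideanSpace ℝ (Fin N)} (he : ‖e‖ = 1)
    (x : EuclideanSpace ℝ (Fin N)) : ‖reflHyp e x‖ = ‖x‖ := by
  have h : ‖reflHyp e x‖ ^ 2 = ‖x‖ ^ 2 := by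
    unfold reflHyp
    rw [norm_sub_sq_real, inner_smul_right, norm_smul, he, mul_one, Real.norm_eq_abs, sq_abs]
    ring
  exact (sq_eq_sq₀ (norm_nonneg _) (norm_nonneg _)).1 h

lemma inner_reflHyp {e : EuclideanSpace ℝ (Fin N)} (he : ‖e‖ = 1)
    (x : EuclideanSpace ℝ (Fin N)) : ⟪reflHyp e x, e⟫ = -⟪x, e⟫ := by
  unfold reflHyp
  rw [inner_sub_left, inner_smul_left, real_inner_self_eq_norm_sq, he]
  simp
  ring

lemma reflHyp_reflHyp {e : EuclideanSpace ℝ (Fin N)} (he : ‖e‖ = 1)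
    (x : EuclideanSpace ℝ (Fin N)) : reflHyp e (reflHyp e x) = x := by
  conv_lhs => rw [reflHyp, inner_reflHyp he, reflHyp]
  module

lemma reflHyp_neg (e x : EuclideanSpace ℝ (Fin N)) : reflHyp (-e) x = reflHyp e x := by
  simp [reflHyp]

lemma continuous_reflHyp (e : EuclideanSpace ℝ (Fin N)) : Continuous (reflHyp e) := by
  unfold reflHyp
  fun_prop

lemma measurePreserving_reflHyp {e : EuclideanSpace ℝ (Fin N)} (he : ‖e‖ = 1) :
    MeasurePreserving (reflHyp e) volume volume := by
  have h : reflHyp e = (ℝ ∙ e)ᗮ.reflection := by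
    ext1 x
    rw [Submodule.reflection_orthogonal_apply, Submodule.reflection_singleton_apply, he,
      real_inner_comm]
    simp [reflHyp, two_mul, two_smul, add_smul]
  rw [h]
  exact LinearIsometryEquiv.measurePreserving _

/-! ### Radial domains and closed annuli -/

lemma IsRadialDomain.mem_of_norm_eq {B : Set (EuclideanSpace ℝ (Fin N))} (hB : IsRadialDomain B)
    {x y : EuclideanSpace ℝ (Fin N)} (hx : x ∈ B) (h : ‖y‖ = ‖x‖) : y ∈ B := by
  rcases hB with ⟨R, -, rfl⟩ | ⟨r, R, -, -, rfl⟩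
  · simpa [h] using hx
  · simpa [h] using hx

lemma IsRadialDomain.isOpen {B : Set (EuclideanSpace ℝ (Fin N))} (hB : IsRadialDomain B) :
    IsOpen B := by
  rcases hB with ⟨R, -, rfl⟩ | ⟨r, R, -, -, rfl⟩
  · exact isOpen_ball
  · exact (isOpen_lt continuous_const continuous_norm).inter
      (isOpen_lt continuous_norm continuous_const)

lemma IsRadialDomain.exists_annulus {B : Set (EuclideanSpace ℝ (Fin N))} (hB : IsRadialDomain B)
    {x : EuclideanSpace ℝ (Fin N)} (hx : x ∈ B) :
    ∃ a b : ℝ, a < ‖x‖ ∧ ‖x‖ < b ∧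
      {y : EuclideanSpace ℝ (Fin N) | a ≤ ‖y‖ ∧ ‖y‖ ≤ b} ⊆ B := by
  rcases hB with ⟨R, -, rfl⟩ | ⟨r, R, -, -, rfl⟩
  · rw [mem_ball_zero_iff] at hx
    refine ⟨‖x‖ - 1, (‖x‖ + R) / 2, by linarith, by linarith, fun y hy => ?_⟩
    rw [mem_ball_zero_iff]
    linarith [hy.2]
  · obtain ⟨h1, h2⟩ := hx
    exact ⟨(r + ‖x‖) / 2, (‖x‖ + R) / 2, by linarith, by linarith, fun y hy =>
      ⟨by linarith [hy.1], by linarith [hy.2]⟩⟩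

lemma isCompact_annulus (a b : ℝ) :
    IsCompact {y : EuclideanSpace ℝ (Fin N) | a ≤ ‖y‖ ∧ ‖y‖ ≤ b} := by
  refine (isCompact_closedBall (0 : EuclideanSpace ℝ (Fin N)) b).of_isClosed_subset ?_ ?_
  · exact (isClosed_le continuous_const continuous_norm).inter
      (isClosed_le continuous_norm continuous_const)
  · intro y hy
    simpa using hy.2

/-! ### First moments over annuli -/

/-- On the half `⟪y, e⟫ < 0` both factors are nonpositive, because `σ_e y` is in `B(e)`. -/
lemma reflIntegrand_nonneg {B : Set (EuclideanSpace ℝ (Fin N))} (hB : IsRadialDomain B)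
    {𝓤 : Set (EuclideanSpace ℝ (Fin N) → ℝ)} {u : EuclideanSpace ℝ (Fin N) → ℝ} (hu : u ∈ 𝓤)
    {e : EuclideanSpace ℝ (Fin N)} (he : e ∈ reflMonotoneSet B 𝓤)
    {y : EuclideanSpace ℝ (Fin N)} (hy : y ∈ B) :
    0 ≤ (u y - u (reflHyp e y)) * ⟪y, e⟫ := by
  obtain ⟨he1, he2⟩ := he
  rcases le_or_gt ⟪y, e⟫ 0 with h | h
  · rcases h.eq_or_lt with h | h
    · simp [h]
    · have := he2 u hu (reflHyp e y)
        ⟨hB.mem_of_norm_eq hy (norm_reflHyp he1 y), by rw [inner_reflHyp he1]; linarith⟩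
      rw [reflHyp_reflHyp he1] at this
      exact mul_nonneg_of_nonpos_of_nonpos (by linarith) h.le
  · exact mul_nonneg (by linarith [he2 u hu y ⟨hy, h⟩]) h.le

lemma continuousOn_comp_reflHyp {B : Set (EuclideanSpace ℝ (Fin N))} (hB : IsRadialDomain B)
    {u : EuclideanSpace ℝ (Fin N) → ℝ} (hu : ContinuousOn u B)
    {e : EuclideanSpace ℝ (Fin N)} (he : ‖e‖ = 1) :
    ContinuousOn (fun y => u (reflHyp e y)) B :=
  hu.comp (continuous_reflHyp e).continuousOn
    fun y hy => hB.mem_of_norm_eq hy (norm_reflHyp he y)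

/-- Antisymmetrization of the first moment of `u` over an annulus by the change of variables
`y ↦ σ_e y`. -/
lemma two_mul_moment {B : Set (EuclideanSpace ℝ (Fin N))} (hB : IsRadialDomain B)
    {u : EuclideanSpace ℝ (Fin N) → ℝ} (hu : ContinuousOn u B)
    {e : EuclideanSpace ℝ (Fin N)} (he : ‖e‖ = 1) {a b : ℝ}
    (hK : {y : EuclideanSpace ℝ (Fin N) | a ≤ ‖y‖ ∧ ‖y‖ ≤ b} ⊆ B) :
    2 * ⟪∫ y in {y : EuclideanSpace ℝ (Fin N) | a ≤ ‖y‖ ∧ ‖y‖ ≤ b}, u y • y, e⟫ =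
      ∫ y in {y : EuclideanSpace ℝ (Fin N) | a ≤ ‖y‖ ∧ ‖y‖ ≤ b},
        (u y - u (reflHyp e y)) * ⟪y, e⟫ := by
  set K : Set (EuclideanSpace ℝ (Fin N)) := {y | a ≤ ‖y‖ ∧ ‖y‖ ≤ b} with hKdef
  have hKc : IsCompact K := isCompact_annulus a b
  have hu' : ContinuousOn u K := hu.mono hK
  have hur : ContinuousOn (fun y => u (reflHyp e y)) K :=
    (continuousOn_comp_reflHyp hB hu he).mono hK
  have hin : ContinuousOn (fun y : EuclideanSpace ℝ (Fin N) => ⟪y, e⟫) K := by fun_prop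
  have h1 : ⟪∫ y in K, u y • y, e⟫ = ∫ y in K, u y * ⟪y, e⟫ := by
    have hint : IntegrableOn (fun y => u y • y) K :=
      (hu'.smul continuousOn_id).integrableOn_compact hKc
    rw [real_inner_comm, ← integral_inner hint]
    refine integral_congr_ae (Eventually.of_forall fun y => ?_)
    simp [inner_smul_right, real_inner_comm]
  have h2 : ∫ y in K, u y * ⟪y, e⟫ = ∫ y in K, -(u (reflHyp e y) * ⟪y, e⟫) := by
    have hpre : reflHyp e ⁻¹' K = K := by
      ext y
      simp [hKdef, norm_reflHyp he]
    have hemb : MeasurableEmbedding (reflHyp e) :=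
      (Homeomorph.mk ⟨reflHyp e, reflHyp e, reflHyp_reflHyp he, reflHyp_reflHyp he⟩
        (continuous_reflHyp e) (continuous_reflHyp e)).measurableEmbedding
    have := (measurePreserving_reflHyp he).setIntegral_preimage_emb hemb
      (fun y => u y * ⟪y, e⟫) K
    rw [← this, hpre]
    simp [inner_reflHyp he]
  rw [two_mul]
  nth_rewrite 2 [h1]
  rw [h1]
  nth_rewrite 2 [h2]
  have hi1 : IntegrableOn (fun y => u y * ⟪y, e⟫) K := (hu'.mul hin).integrableOn_compact hKc
  have hi2 : IntegrableOn (fun y => -(u (reflHyp e y) * ⟪y, e⟫)) K :=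
    (hur.mul hin).neg.integrableOn_compact hKc
  rw [← integral_add hi1 hi2]
  refine integral_congr_ae (Eventually.of_forall fun y => ?_)
  simp only
  ring

/-- Strict positivity of the moment in a direction `e ∈ M` for which `u` and `u ∘ σ_e` differ
somewhere in the open annulus. -/
lemma moment_pos {B : Set (EuclideanSpace ℝ (Fin N))} (hB : IsRadialDomain B)
    {𝓤 : Set (EuclideanSpace ℝ (Fin N) → ℝ)} {u : EuclideanSpace ℝ (Fin N) → ℝ} (hu𝓤 : u ∈ 𝓤)
    (hu : ContinuousOn u B) {e : EuclideanSpace ℝ (Fin N)} (he : e ∈ reflMonotoneSet B 𝓤)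
    {a b : ℝ} (hK : {y : EuclideanSpace ℝ (Fin N) | a ≤ ‖y‖ ∧ ‖y‖ ≤ b} ⊆ B)
    {x : EuclideanSpace ℝ (Fin N)} (hax : a < ‖x‖) (hxb : ‖x‖ < b)
    (hx : (u x - u (reflHyp e x)) * ⟪x, e⟫ ≠ 0) :
    0 < ⟪∫ y in {y : EuclideanSpace ℝ (Fin N) | a ≤ ‖y‖ ∧ ‖y‖ ≤ b}, u y • y, e⟫ := by
  have hmom := two_mul_moment hB hu he.1 hK
  set K : Set (EuclideanSpace ℝ (Fin N)) := {y | a ≤ ‖y‖ ∧ ‖y‖ ≤ b} with hKdef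
  have hKc : IsCompact K := isCompact_annulus a b
  set F : EuclideanSpace ℝ (Fin N) → ℝ := fun y => (u y - u (reflHyp e y)) * ⟪y, e⟫ with hF
  have hFc : ContinuousOn F B :=
    (hu.sub (continuousOn_comp_reflHyp hB hu he.1)).mul (by fun_prop)
  have hxB : x ∈ B := hK ⟨hax.le, hxb.le⟩
  suffices 0 < ∫ y in K, F y by linarith
  rw [setIntegral_pos_iff_support_of_nonneg_ae
    ((ae_restrict_mem hKc.measurableSet).mono
      fun y hy => reflIntegrand_nonneg hB hu𝓤 he (hK hy))
    ((hFc.mono hK).integrableOn_compact hKc)]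
  have hnhds : Function.support F ∩ K ∈ 𝓝 x := by
    refine inter_mem ?_ ?_
    · exact (hFc.continuousAt (hB.isOpen.mem_nhds hxB)).eventually_ne hx
    · filter_upwards [continuous_norm.continuousAt.eventually_const_lt hax,
        continuous_norm.continuousAt.eventually_lt_const hxb] with y h1 h2
      exact ⟨h1.le, h2.le⟩
  exact Measure.measure_pos_of_mem_nhds volume hnhds

/-! ### From half-spheres in `M` to foliated Schwarz symmetry -/

/-- The reflection with normal `(x - y) / ‖x - y‖` maps `x` to `y`. -/
lemma foliatedSchwarzOn_of_forall_mem {B : Set (EuclideanSpace ℝ (Fin N))}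
    {𝓤 : Set (EuclideanSpace ℝ (Fin N) → ℝ)} {p : EuclideanSpace ℝ (Fin N)}
    (h : ∀ f : EuclideanSpace ℝ (Fin N), ‖f‖ = 1 → 0 ≤ ⟪f, p⟫ → f ∈ reflMonotoneSet B 𝓤)
    {u : EuclideanSpace ℝ (Fin N) → ℝ} (hu : u ∈ 𝓤) : FoliatedSchwarzOn B u p := by
  intro x hx y hy hxy hp
  rcases eq_or_ne x y with rfl | hne
  · exact le_rfl
  have hd : 0 < ‖x - y‖ := norm_pos_iff.2 (sub_ne_zero.2 hne)
  have hsq : ‖x - y‖ ^ 2 = 2 * ⟪x, x - y⟫ := by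
    rw [norm_sub_sq_real, inner_sub_right, real_inner_self_eq_norm_sq, hxy]
    ring
  set f : EuclideanSpace ℝ (Fin N) := ‖x - y‖⁻¹ • (x - y) with hf
  have hxf : ⟪x, f⟫ = ‖x - y‖ / 2 := by
    rw [hf, inner_smul_right]
    field_simp
    linarith
  have hf1 : ‖f‖ = 1 := by
    rw [hf, norm_smul, norm_inv, norm_norm, inv_mul_cancel₀ hd.ne']
  have hfp : 0 ≤ ⟪f, p⟫ := by
    rw [hf, inner_smul_left, inner_sub_left]
    exact mul_nonneg (by simp) (by linarith)
  have key := (h f hf1 hfp).2 u hu x ⟨hx, by rw [hxf]; linarith⟩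
  have hr : reflHyp f x = y := by
    rw [reflHyp, hxf, hf, smul_smul, show 2 * (‖x - y‖ / 2) * ‖x - y‖⁻¹ = 1 by field_simp]
    simp
  rwa [hr] at key

/-- Unit vectors orthogonal to `p` are limits of the normalized vectors `f + t p`, `t ↓ 0`, and
the inequality defining `M` passes to the limit. -/
lemma mem_reflMonotoneSet_of_inner_nonneg {B : Set (EuclideanSpace ℝ (Fin N))}
    (hB : IsRadialDomain B) {𝓤 : Set (EuclideanSpace ℝ (Fin N) → ℝ)}
    (h𝓤 : ∀ u ∈ 𝓤, ContinuousOn u B) {p : EuclideanSpace ℝ (Fin N)} (hp : ‖p‖ = 1)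
    (h : ∀ f : EuclideanSpace ℝ (Fin N), ‖f‖ = 1 → 0 < ⟪f, p⟫ → f ∈ reflMonotoneSet B 𝓤)
    (f : EuclideanSpace ℝ (Fin N)) (hf : ‖f‖ = 1) (hfp : 0 ≤ ⟪f, p⟫) :
    f ∈ reflMonotoneSet B 𝓤 := by
  refine ⟨hf, fun u hu x hx => ?_⟩
  obtain ⟨hxB, hxf⟩ := hx
  let g : ℝ → EuclideanSpace ℝ (Fin N) := fun t => ‖f + t • p‖⁻¹ • (f + t • p)
  have hg0 : g 0 = f := by simp [g, hf]
  have hgc : ContinuousAt g 0 := by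
    have hc : ContinuousAt (fun t : ℝ => f + t • p) 0 := by fun_prop
    exact (hc.norm.inv₀ (by simp [hf])).smul hc
  have hpos : ∀ t : ℝ, 0 < t → 0 < ⟪f + t • p, p⟫ := by
    intro t ht
    rw [inner_add_left, inner_smul_left, real_inner_self_eq_norm_sq, hp]
    simp
    linarith
  have hgM : ∀ t : ℝ, 0 < t → g t ∈ reflMonotoneSet B 𝓤 := by
    intro t ht
    have hne : 0 < ‖f + t • p‖ := by
      rw [norm_pos_iff]
      intro h0
      have := hpos t ht
      simp [h0] at this
    refine h _ ?_ ?_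
    · simp only [g]
      rw [norm_smul, norm_inv, norm_norm, inv_mul_cancel₀ hne.ne']
    · simp only [g]
      rw [inner_smul_left]
      exact mul_pos (by simpa using hne) (hpos t ht)
  have hrc : ContinuousAt (fun t => u (reflHyp (g t) x)) 0 := by
    have h1 : ContinuousAt (fun t => reflHyp (g t) x) 0 := by
      unfold reflHyp
      fun_prop
    have h2 : ContinuousAt u (reflHyp (g 0) x) := by
      rw [hg0]
      exact (h𝓤 u hu).continuousAt
        (hB.isOpen.mem_nhds (hB.mem_of_norm_eq hxB (norm_reflHyp hf x)))
    exact ContinuousAt.comp (f := fun t => reflHyp (g t) x) h2 h1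
  have hlim : Tendsto (fun t => u (reflHyp (g t) x)) (𝓝[>] 0) (𝓝 (u (reflHyp f x))) := by
    have := hrc.tendsto.mono_left (nhdsWithin_le_nhds (s := Ioi (0 : ℝ)))
    rwa [hg0] at this
  have hev : ∀ᶠ t in 𝓝[>] (0 : ℝ), 0 < ⟪x, g t⟫ := by
    have hc : ContinuousAt (fun t => ⟪x, g t⟫) 0 := continuousAt_const.inner hgc
    exact nhdsWithin_le_nhds (hc.eventually_const_lt (by simpa only [hg0] using hxf))
  refine le_of_tendsto hlim ?_
  filter_upwards [hev, self_mem_nhdsWithin] with t ht ht0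
  exact (hgM t ht0).2 u hu x ⟨hxB, ht⟩

/-! ### The common axis -/

/-- Proposition `newprop` of the paper:
if `S = M ∪ (−M)`, then all functions in `𝓤` are foliated Schwarz symmetric
with respect to one common unit vector `p`. -/
theorem foliatedSchwarz_of_sphere_eq_union
    (N : ℕ) (hN : 2 ≤ N)
    (B : Set (EuclideanSpace ℝ (Fin N))) (hB : IsRadialDomain B)
    (𝓤 : Set (EuclideanSpace ℝ (Fin N) → ℝ))
    (h𝓤 : ∀ u ∈ 𝓤, ContinuousOn u B)
    (hSM : ∀ e : EuclideanSpace ℝ (Fin N), ‖e‖ = 1 →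
      e ∈ reflMonotoneSet B 𝓤 ∨ -e ∈ reflMonotoneSet B 𝓤) :
    ∃ p : EuclideanSpace ℝ (Fin N), ‖p‖ = 1 ∧
      ∀ u ∈ 𝓤, FoliatedSchwarzOn B u p := by
  by_cases hall : ∀ e : EuclideanSpace ℝ (Fin N), ‖e‖ = 1 → e ∈ reflMonotoneSet B 𝓤
  · exact ⟨EuclideanSpace.single ⟨0, by omega⟩ 1, by simp,
      fun u hu => foliatedSchwarzOn_of_forall_mem (fun f hf _ => hall f hf) hu⟩
  push Not at hall
  obtain ⟨e, he, heM⟩ := hall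
  have hneg := (hSM e he).resolve_left heM
  have hex : ∃ u ∈ 𝓤, ∃ x ∈ halfDom B e, u x < u (reflHyp e x) := by
    by_contra! hcon
    exact heM ⟨he, hcon⟩
  obtain ⟨u, hu, x, ⟨hxB, hxe⟩, hlt⟩ := hex
  obtain ⟨a, b, hax, hxb, hK⟩ := hB.exists_annulus hxB
  have hpos := moment_pos hB hu (h𝓤 u hu) hneg hK hax hxb (by
    rw [reflHyp_neg, inner_neg_right]
    exact mul_ne_zero (by linarith) (by linarith))
  have hnonneg : ∀ f ∈ reflMonotoneSet B 𝓤,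
      0 ≤ ⟪∫ y in {y : EuclideanSpace ℝ (Fin N) | a ≤ ‖y‖ ∧ ‖y‖ ≤ b}, u y • y, f⟫ := by
    intro f hf
    have h2 := two_mul_moment hB (h𝓤 u hu) hf.1 hK
    have h0 := setIntegral_nonneg (μ := volume) (isCompact_annulus a b).measurableSet
      fun y hy => reflIntegrand_nonneg hB hu hf (hK hy)
    linarith
  set v := ∫ y in {y : EuclideanSpace ℝ (Fin N) | a ≤ ‖y‖ ∧ ‖y‖ ≤ b}, u y • y
  have hv : 0 < ‖v‖ := by
    rw [norm_pos_iff]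
    intro h0
    simp [h0] at hpos
  have hp : ‖‖v‖⁻¹ • v‖ = 1 := by
    rw [norm_smul, norm_inv, norm_norm, inv_mul_cancel₀ hv.ne']
  refine ⟨‖v‖⁻¹ • v, hp, fun w hw => foliatedSchwarzOn_of_forall_mem
    (mem_reflMonotoneSet_of_inner_nonneg hB h𝓤 hp fun f hf hfp => ?_) hw⟩
  refine (hSM f hf).resolve_right fun hfM => ?_
  have h1 := hnonneg _ hfM
  rw [inner_neg_right, real_inner_comm] at h1
  rw [inner_smul_right] at hfp
  have := pos_of_mul_pos_right hfp (inv_nonneg.2 hv.le)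
  linarith

end
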